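/- The sequence (n/ln n)·(B_n/E_n − 1) converges to −1/12 as n → ∞. -/

import Mathlib

/-- Principal branch of the Lambert W function on `[0, ∞)`: for `x ≥ 0`,
`lambertW x` is the unique `y ≥ 0` with `y * exp y = x`. -/
noncomputable def lambertW (x : ℝ) : ℝ := Function.invFun (fun y : ℝ => y * Real.exp y) x

/-- Bell numbers: `Bell 0 = 1` and `Bell (n+1) = ∑_{k=0}^{n} C(n,k) * Bell k`. -/
def Bell : ℕ → ℕ
  | 0 => 1
  | n + 1 => ∑ k ∈ (Finset.range (n + 1)).attach, (n.choose k.1) * Bell k.1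
decreasing_by exact Finset.mem_range.mp k.2

/-- `E n = n! * exp(e^R - 1) / (R^n * sqrt(2π(n+1)(R+1)))` with `R = W(n+1)`. -/
noncomputable def E (n : ℕ) : ℝ :=
  (Nat.factorial n : ℝ) * Real.exp (Real.exp (lambertW (n + 1)) - 1) /
    ((lambertW (n + 1)) ^ n * Real.sqrt (2 * Real.pi * (n + 1) * (lambertW (n + 1) + 1)))

/-- the exponential kernel -/
noncomputable def HH (R θ : ℝ) : ℂ := Complex.exp (R * (Complex.exp (Complex.I * θ) - 1))

lemma HH_taylor (R θ : ℝ) (hR : 1 ≤ R) (h : R * |θ| ≤ 1) :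
    ‖HH R θ - (1 + Complex.I * (R * θ) - (R + R^2) * θ^2 / 2
      - Complex.I * ((R + 3 * R^2 + R^3) * θ^3 / 6) + R^4 * θ^4 / 24)‖
      ≤ 3 * (R^3 * |θ|^4 + R^5 * |θ|^5) := by
  have hR0 : 0 ≤ R := by linarith
  have ht0 : 0 ≤ |θ| := abs_nonneg θ
  have hθ : |θ| ≤ 1 := by nlinarith
  set t := |θ| with ht
  have hn : ‖Complex.I * (θ:ℂ)‖ = t := by simp [ht]
  have hn1 : ‖Complex.I * (θ:ℂ)‖ ≤ 1 := by rw [hn]; exact hθ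
  set e : ℂ := Complex.exp (Complex.I * θ) - 1 with he
  have e1 : ‖e‖ ≤ t := by
    have := Real.norm_exp_I_mul_ofReal_sub_one_le (x := θ)
    simpa [he, ht] using this
  have e2 : ‖e - Complex.I * θ‖ ≤ t^2 := by
    have := Complex.exp_bound hn1 (n := 2) (by norm_num)
    rw [hn] at this
    simp [Finset.sum_range_succ] at this
    have h2 : e - Complex.I * θ = Complex.exp (Complex.I * θ) - (1 + Complex.I * θ) := by
      rw [he]; ring
    rw [h2]; refine this.trans ?_
    nlinarith [sq_nonneg t]
  have e3 : ‖e - (Complex.I * θ - θ^2/2)‖ ≤ t^3 := by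
    have := Complex.exp_bound hn1 (n := 3) (by norm_num)
    rw [hn] at this
    simp [Finset.sum_range_succ, Nat.factorial, mul_pow] at this
    have h2 : e - (Complex.I * θ - θ^2/2) = Complex.exp (Complex.I * θ) - (1 + Complex.I * θ + -(θ:ℂ)^2/2) := by
      rw [he]; ring
    rw [h2]; refine this.trans ?_
    have : 0 ≤ t^3 := by positivity
    nlinarith
  have e4 : ‖e - (Complex.I * θ - θ^2/2 - Complex.I * θ^3/6)‖ ≤ t^4 := by
    have := Complex.exp_bound hn1 (n := 4) (by norm_num)
    rw [hn] at this
    simp [Finset.sum_range_succ, Nat.factorial, mul_pow] at this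
    have h2 : e - (Complex.I * θ - θ^2/2 - Complex.I * θ^3/6) = Complex.exp (Complex.I * θ) - (1 + Complex.I * θ + -(θ:ℂ)^2/2 + -(Complex.I * (θ:ℂ)^3)/6) := by
      rw [he]; ring
    rw [h2]; refine this.trans ?_
    have : 0 ≤ t^4 := by positivity
    nlinarith
  have hp2 : ‖Complex.I * θ - (θ:ℂ)^2/2‖ ≤ 3/2 * t := by
    refine (norm_sub_le _ _).trans ?_
    rw [hn]
    have : ‖(θ:ℂ)^2/2‖ = t^2/2 := by simp [ht]
    rw [this]; nlinarith
  have II : Complex.I * Complex.I = -1 := Complex.I_mul_I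
  have s2 : ‖e^2 - (-(θ:ℂ)^2 - Complex.I * θ^3)‖ ≤ 3 * t^4 := by
    have : e^2 - (-(θ:ℂ)^2 - Complex.I * θ^3) = (e - (Complex.I * θ - θ^2/2)) * (e + (Complex.I * θ - θ^2/2)) + θ^4/4 := by
      linear_combination (θ:ℂ)^2 * II
    rw [this]
    refine (norm_add_le _ _).trans ?_
    rw [norm_mul]
    have h4 : ‖(θ:ℂ)^4/4‖ = t^4/4 := by simp [ht]
    have h5 : ‖e + (Complex.I * θ - θ^2/2)‖ ≤ 5/2 * t := (norm_add_le _ _).trans (by linarith)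
    rw [h4]
    have := mul_le_mul e3 h5 (norm_nonneg _) (by positivity)
    nlinarith [pow_nonneg ht0 4]
  have s3 : ‖e^3 - (-Complex.I * θ^3)‖ ≤ 3 * t^4 := by
    have : e^3 - (-Complex.I * θ^3) = (e - Complex.I * θ) * (e^2 + e * (Complex.I * θ) + (Complex.I * θ)^2) := by
      linear_combination (θ:ℂ)^3 * Complex.I * II
    rw [this, norm_mul]
    have h5 : ‖e^2 + e * (Complex.I * θ) + (Complex.I * θ)^2‖ ≤ t^2 + t * t + t^2 := by
      refine (norm_add₃_le).trans ?_
      rw [norm_pow, norm_mul, norm_pow, hn]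
      gcongr
    have := mul_le_mul e2 h5 (norm_nonneg _) (by positivity)
    nlinarith
  have s4 : ‖e^4 - θ^4‖ ≤ 4 * t^5 := by
    have : e^4 - θ^4 = (e - Complex.I * θ) * ((e + (Complex.I * θ)) * (e^2 + (Complex.I * θ)^2)) := by
      linear_combination (θ:ℂ)^4 * (Complex.I^2 - 1) * II
    rw [this, norm_mul, norm_mul]
    have h5 : ‖e + (Complex.I * θ)‖ ≤ t + t := by
      refine (norm_add_le _ _).trans ?_
      rw [hn]
      gcongr
    have h6 : ‖e^2 + (Complex.I * θ)^2‖ ≤ t^2 + t^2 := by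
      refine (norm_add_le _ _).trans ?_
      rw [norm_pow, norm_pow, hn]
      gcongr
    calc _ ≤ t^2 * ((t+t)*(t^2+t^2)) := by gcongr
      _ = _ := by ring
  have hw : ‖(R:ℂ) * e‖ ≤ R * t := by
    rw [norm_mul, Complex.norm_real, Real.norm_of_nonneg hR0]; gcongr
  have s5 : ‖Complex.exp (R * e) - (1 + R * e + (R*e)^2/2 + (R*e)^3/6 + (R*e)^4/24)‖ ≤ (R * t)^5 := by
    have := Complex.exp_bound (hw.trans h) (n := 5) (by norm_num)
    simp [Finset.sum_range_succ, Nat.factorial] at this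
    have h0 : 0 ≤ ‖(R:ℂ)*e‖^5 := by positivity
    have h1 : ‖(R:ℂ)*e‖^5 ≤ (R*t)^5 := by gcongr
    have h2 : (‖(R:ℂ)*e‖)^5 = (|R| * ‖e‖)^5 := by simp
    refine this.trans ?_
    rw [← h2]
    nlinarith
  have key : HH R θ - (1 + Complex.I * (R * θ) - (R + R^2) * θ^2 / 2
      - Complex.I * ((R + 3 * R^2 + R^3) * θ^3 / 6) + R^4 * θ^4 / 24)
      = (Complex.exp (R * e) - (1 + R * e + (R*e)^2/2 + (R*e)^3/6 + (R*e)^4/24))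
       + R * (e - (Complex.I * θ - θ^2/2 - Complex.I * θ^3/6))
       + R^2/2 * (e^2 - (-(θ:ℂ)^2 - Complex.I * θ^3))
       + R^3/6 * (e^3 - (-Complex.I * θ^3)) + R^4/24 * (e^4 - θ^4) := by
    rw [HH, ← he]; ring
  rw [key]
  have nR : ‖(R:ℂ)‖ = R := by rw [Complex.norm_real, Real.norm_of_nonneg hR0]
  have b1 : ‖R * (e - (Complex.I * θ - θ^2/2 - Complex.I * θ^3/6))‖ ≤ R * t^4 := by
    rw [norm_mul, nR]; gcongr
  have b2 : ‖(R:ℂ)^2/2 * (e^2 - (-(θ:ℂ)^2 - Complex.I * θ^3))‖ ≤ R^2/2 * (3*t^4) := by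
    rw [norm_mul, norm_div, norm_pow, nR, Complex.norm_two]; gcongr
  have b3 : ‖(R:ℂ)^3/6 * (e^3 - (-Complex.I * θ^3))‖ ≤ R^3/6 * (3*t^4) := by
    rw [norm_mul, norm_div, norm_pow, nR, Complex.norm_ofNat]; gcongr
  have b4 : ‖(R:ℂ)^4/24 * (e^4 - θ^4)‖ ≤ R^4/24 * (4*t^5) := by
    rw [norm_mul, norm_div, norm_pow, nR, Complex.norm_ofNat]; gcongr
  have := norm_add_le_of_le (norm_add_le_of_le (norm_add_le_of_le (norm_add_le_of_le s5 b1) b2) b3) b4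
  refine this.trans ?_
  have r1 : R * t^4 ≤ R^3 * t^4 := by gcongr; nlinarith
  have r2 : R^2 * t^4 ≤ R^3 * t^4 := by gcongr <;> linarith
  have r4 : R^4 * t^5 ≤ R^5 * t^5 := by gcongr <;> linarith
  have r5 : 0 ≤ R^5 * t^5 := by positivity
  nlinarith

lemma Bell_succ (n : ℕ) : Bell (n+1) = ∑ k ∈ Finset.range (n+1), n.choose k * Bell k := by
  rw [Bell]
  exact Finset.sum_attach (Finset.range (n+1)) (fun k => n.choose k * Bell k)

lemma bell_deriv (n : ℕ) :
    iteratedDeriv n (fun z : ℂ => Complex.exp (Complex.exp z - 1)) 0 = Bell n := by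
  induction n using Nat.strong_induction_on with
  | _ n ih =>
    cases n with
    | zero => simp [Bell]
    | succ n =>
      rw [iteratedDeriv_succ']
      have hd : deriv (fun z : ℂ => Complex.exp (Complex.exp z - 1))
          = (fun z : ℂ => Complex.exp (Complex.exp z - 1)) * Complex.exp := by
        funext z
        have : HasDerivAt (fun z : ℂ => Complex.exp (Complex.exp z - 1))
          (Complex.exp (Complex.exp z - 1) * Complex.exp z) z :=
          ((Complex.hasDerivAt_exp z).sub_const 1).cexp
        exact this.deriv
      rw [hd, iteratedDeriv_mul (by fun_prop) (by fun_prop), Bell_succ]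
      push_cast
      refine Finset.sum_congr rfl fun k hk => ?_
      rw [ih k (by simpa using hk)]
      simp [iteratedDeriv_eq_iterate]

/-- real integrand -/
noncomputable def ph (R θ : ℝ) : ℝ :=
  Real.exp (Real.exp R * ((HH R θ).re - 1)) *
    Real.cos (Real.exp R * (HH R θ).im - (R * Real.exp R - 1) * θ)

lemma bell_integral (n : ℕ) (R : ℝ) (hR : 0 < R) (hn : R * Real.exp R = n + 1) :
    (Bell n : ℝ) = n.factorial * Real.exp (Real.exp R - 1) / R^n / (2 * Real.pi) *
      ∫ θ in (-Real.pi)..Real.pi, ph R θ := by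
  have hf : Differentiable ℂ (fun z : ℂ => Complex.exp (Complex.exp z - 1)) := by fun_prop
  have hc := (hf.differentiableOn (s := Metric.closedBall 0 R)).circleIntegral_one_div_sub_center_pow_smul hR n
  rw [bell_deriv, circleIntegral] at hc
  have hRc : (R:ℂ) ≠ 0 := by exact_mod_cast hR.ne'
  set F : ℝ → ℂ := fun θ => Complex.exp (Real.exp R * (HH R θ - 1) - Complex.I * (n * θ)) with hF
  have h1 : ∀ θ : ℝ, deriv (circleMap 0 R) θ • (1 / (circleMap 0 R θ - 0)^(n+1)) •
      Complex.exp (Complex.exp (circleMap 0 R θ) - 1) =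
      (Complex.I * (Real.exp (Real.exp R - 1) / R^n : ℝ)) * F θ := by
    intro θ
    rw [deriv_circleMap, circleMap_zero, hF]
    simp only [HH, smul_eq_mul, sub_zero]
    have e0 : Complex.exp (θ * Complex.I) ≠ 0 := Complex.exp_ne_zero _
    have e1 : Complex.exp (-(Complex.I * (n * θ))) = (Complex.exp (θ * Complex.I))⁻¹ ^ n := by
      rw [← Complex.exp_neg, ← Complex.exp_nat_mul]; congr 1; ring
    have e2 : Complex.exp (R * Complex.exp (θ * Complex.I)) = Complex.exp R * Complex.exp (R * (Complex.exp (Complex.I * θ) - 1)) := by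
      rw [← Complex.exp_add]; congr 1; rw [mul_comm (θ:ℂ)]; ring
    have e3 : Complex.exp (Complex.exp (R * Complex.exp (θ * Complex.I)) - 1) =
       Complex.exp (Complex.exp R - 1) * Complex.exp (Complex.exp R * (Complex.exp (R * (Complex.exp (Complex.I * θ) - 1)) - 1)) := by
      rw [← Complex.exp_add, e2]; congr 1; ring
    rw [sub_eq_add_neg _ (Complex.I * (n * θ)), Complex.exp_add, e1, e3]
    push_cast
    simp only [inv_pow, mul_pow, pow_succ]
    field_simp
  simp only [h1] at hc
  rw [intervalIntegral.integral_const_mul] at hc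
  have hper : Function.Periodic F (2 * Real.pi) := by
    intro θ
    simp only [hF, HH]
    have a1 : Complex.exp (Complex.I * (θ + 2 * Real.pi : ℝ)) = Complex.exp (Complex.I * θ) := by
      rw [← Complex.exp_periodic (Complex.I * θ)]; congr 1; push_cast; ring
    rw [a1, Complex.exp_eq_exp_iff_exists_int]
    refine ⟨-n, ?_⟩
    push_cast; ring
  have hshift : ∫ θ in (0:ℝ)..2 * Real.pi, F θ = ∫ θ in (-Real.pi)..Real.pi, F θ := by
    have := hper.intervalIntegral_add_eq 0 (-Real.pi)
    rw [zero_add] at this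
    rw [this]; congr 1; ring
  have hcont : Continuous F := by
    simp only [hF, HH]; fun_prop
  have hre : ∀ θ, (F θ).re = ph R θ := by
    intro θ
    simp only [hF, ph, Complex.exp_re]
    have : R * Real.exp R - 1 = n := by linarith
    rw [this]
    congr 1
    · congr 1
      rw [Complex.sub_re, Complex.re_ofReal_mul]
      simp
    · congr 1
      rw [Complex.sub_im, Complex.im_ofReal_mul]
      simp
  have hint : (∫ θ in (-Real.pi)..Real.pi, F θ).re = ∫ θ in (-Real.pi)..Real.pi, ph R θ := by
    simp only [← hre]
    exact (Complex.reCLM.intervalIntegral_comp_comm (hcont.intervalIntegrable _ _)).symm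
  rw [hshift] at hc
  have hc2 : ((Real.exp (Real.exp R - 1) / R^n : ℝ) : ℂ) * (∫ θ in (-Real.pi)..Real.pi, F θ) = ((2 * Real.pi / n.factorial * Bell n : ℝ) : ℂ) := by
    apply mul_left_cancel₀ Complex.I_ne_zero
    rw [← mul_assoc, hc, smul_eq_mul]; push_cast; ring
  have hc3 := congrArg Complex.re hc2
  rw [Complex.re_ofReal_mul, hint, Complex.ofReal_re] at hc3
  have hfac : (n.factorial : ℝ) ≠ 0 := by positivity
  have hpi := Real.pi_ne_zero
  have : (Bell n : ℝ) = n.factorial / (2 * Real.pi) * (2 * Real.pi / n.factorial * Bell n) := by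
    field_simp
  rw [this, ← hc3]; ring

open Filter Topology MeasureTheory in
lemma lim_comb (M m x y : ℝ → ℝ) (p q : ℝ) (hm : Tendsto m atTop atTop) (hM : ∀ R, M R = m R ^ 2)
    (hx : Tendsto (fun R => M R * x R) atTop (𝓝 p)) (hy : Tendsto (fun R => m R * y R) atTop (𝓝 q)) :
    Tendsto (fun R => M R * (Real.exp (x R) * Real.cos (y R) - 1)) atTop (𝓝 (p - q^2/2)) := by
  have hMt : Tendsto M atTop atTop := by
    have : M = fun R => m R ^ 2 := funext hM
    rw [this]; exact (tendsto_pow_atTop (by norm_num)).comp hm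
  have hx0 : Tendsto x atTop (𝓝 0) := by
    have := hx.mul (tendsto_inv_atTop_zero.comp hMt)
    rw [mul_zero] at this
    refine this.congr' ?_
    filter_upwards [hMt.eventually_gt_atTop 0] with R hR
    simp only [Function.comp]; field_simp
  have hy0 : Tendsto y atTop (𝓝 0) := by
    have := hy.mul (tendsto_inv_atTop_zero.comp hm)
    rw [mul_zero] at this
    refine this.congr' ?_
    filter_upwards [hm.eventually_gt_atTop 0] with R hR
    simp only [Function.comp]; field_simp
  have hxs : ∀ᶠ R in atTop, |x R| ≤ 1 := by
    have := hx0.abs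
    rw [abs_zero] at this
    exact this.eventually_le_const (by norm_num)
  have hys : ∀ᶠ R in atTop, |y R| ≤ 1 := by
    have := hy0.abs
    rw [abs_zero] at this
    exact this.eventually_le_const (by norm_num)
  have t1 : Tendsto (fun R => M R * (Real.exp (x R) - 1 - x R)) atTop (𝓝 0) := by
    have h0 : Tendsto (fun R => |M R * x R| * |x R|) atTop (𝓝 0) := by
      have := hx.abs.mul hx0.abs
      simpa using this
    refine squeeze_zero_norm' ?_ h0
    filter_upwards [hxs] with R hR
    have := Real.abs_exp_sub_one_sub_id_le hR
    rw [Real.norm_eq_abs, abs_mul, abs_mul, mul_assoc, ← abs_mul (x R), ← sq, abs_of_nonneg (sq_nonneg (x R))]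
    gcongr
  have t2 : Tendsto (fun R => M R * (Real.cos (y R) - (1 - y R ^2/2))) atTop (𝓝 0) := by
    have h0 : Tendsto (fun R => (m R * y R)^2 * |y R| ^ 2) atTop (𝓝 0) := by
      have := (hy.pow 2).mul (hy0.abs.pow 2)
      simpa using this
    refine squeeze_zero_norm' ?_ h0
    filter_upwards [hys] with R hR
    have := Real.cos_bound hR
    rw [Real.norm_eq_abs, abs_mul, hM, abs_of_nonneg (sq_nonneg (m R)), mul_pow, mul_assoc]
    gcongr
    refine this.trans ?_
    have : |y R|^4 = y R ^2 * |y R|^2 := by rw [← sq_abs (y R)]; ring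
    rw [this]
    have : 0 ≤ y R ^2 * |y R|^2 := by positivity
    linarith
  have hc : Tendsto (fun R => Real.cos (y R)) atTop (𝓝 1) := by
    have := (Real.continuous_cos.tendsto 0).comp hy0
    rw [Real.cos_zero] at this
    exact this
  have := (((t1.add hx).mul hc).add t2).sub ((hy.pow 2).div_const 2)
  have e : (0 + p) * 1 + 0 - q^2/2 = p - q^2/2 := by ring
  rw [e] at this
  refine this.congr fun R => ?_
  rw [hM]; ring

lemma HH_est (R θ : ℝ) (hR : 1 ≤ R) (h : R * |θ| ≤ 1) :
    |(HH R θ).re - 1 + (R + R^2) * θ^2 / 2 - R^4 * θ^4 / 24| ≤ 3 * (R^3 * |θ|^4 + R^5 * |θ|^5) ∧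
    |(HH R θ).im - R * θ + (R + 3 * R^2 + R^3) * θ^3 / 6| ≤ 3 * (R^3 * |θ|^4 + R^5 * |θ|^5) := by
  have h0 := HH_taylor R θ hR h
  have e : (1 + Complex.I * (R * θ) - (R + R^2) * θ^2 / 2
      - Complex.I * ((R + 3 * R^2 + R^3) * θ^3 / 6) + R^4 * θ^4 / 24 : ℂ) =
      ((1 - (R + R^2) * θ^2 / 2 + R^4 * θ^4 / 24 : ℝ) : ℂ) +
      ((R * θ - (R + 3 * R^2 + R^3) * θ^3 / 6 : ℝ) : ℂ) * Complex.I := by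
    push_cast; ring
  rw [e] at h0
  constructor
  · refine le_trans (le_of_eq ?_) ((Complex.abs_re_le_norm _).trans h0)
    congr 1
    simp only [Complex.sub_re, Complex.add_re, Complex.re_ofReal_mul, Complex.ofReal_re, Complex.I_re]
    ring
  · refine le_trans (le_of_eq ?_) ((Complex.abs_im_le_norm _).trans h0)
    congr 1
    simp only [Complex.sub_im, Complex.add_im, Complex.im_ofReal_mul, Complex.ofReal_im, Complex.I_im]
    ring

/-- correction to the real exponent -/
noncomputable def xx (R θ : ℝ) : ℝ := Real.exp R * ((HH R θ).re - 1 + (R + R^2) * θ^2 / 2)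
/-- phase -/
noncomputable def yy (R θ : ℝ) : ℝ := Real.exp R * (HH R θ).im - (R * Real.exp R - 1) * θ

lemma ph_eq (R θ : ℝ) : ph R θ = Real.exp (-(Real.exp R * (R + R^2) * θ^2) / 2) *
    (Real.exp (xx R θ) * Real.cos (yy R θ)) := by
  rw [ph, xx, yy, ← mul_assoc, ← Real.exp_add]
  congr 2; ring

/-- scale -/
noncomputable def rho (R : ℝ) : ℝ := Real.sqrt (R * (R + 1))

lemma rho_sq {R : ℝ} (hR : 1 ≤ R) : rho R ^ 2 = R * (R+1) := by
  rw [rho, Real.sq_sqrt (by nlinarith)]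

lemma rho_pos {R : ℝ} (hR : 1 ≤ R) : 0 < rho R := Real.sqrt_pos.2 (by nlinarith)

lemma le_rho {R : ℝ} (hR : 1 ≤ R) : R ≤ rho R := Real.le_sqrt_of_sq_le (by nlinarith)

/-- half exponential -/
noncomputable def mm (R : ℝ) : ℝ := Real.exp (R / 2)

lemma mm_sq (R : ℝ) : mm R ^ 2 = Real.exp R := by
  rw [mm, ← Real.exp_nat_mul]; congr 1; push_cast; ring

lemma mm_pos (R : ℝ) : 0 < mm R := Real.exp_pos _

open Filter Topology in
lemma mm_tendsto : Tendsto mm atTop atTop :=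
  Real.tendsto_exp_atTop.comp (tendsto_id.atTop_div_const (by norm_num))

open Filter Topology in
lemma rho_lim : Tendsto (fun R => R / rho R) atTop (𝓝 1) := by
  have h1 : Tendsto (fun R : ℝ => Real.sqrt (1 / (1 + R⁻¹))) atTop (𝓝 1) := by
    have : Tendsto (fun R : ℝ => (1:ℝ) / (1 + R⁻¹)) atTop (𝓝 (1 / (1 + 0))) :=
      tendsto_const_nhds.div (tendsto_const_nhds.add tendsto_inv_atTop_zero) (by norm_num)
    have := (Real.continuous_sqrt.tendsto _).comp this
    rw [add_zero, div_one, Real.sqrt_one] at this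
    exact this
  refine h1.congr' ?_
  filter_upwards [eventually_ge_atTop 1] with R hR
  rw [Real.sqrt_eq_iff_mul_self_eq_of_pos (div_pos (by linarith) (rho_pos hR))]
  have := rho_pos hR
  rw [div_mul_div_comm, ← sq (rho R), rho_sq hR]
  field_simp

open Filter Topology in
lemma x_lim (s : ℝ) : Tendsto (fun R => Real.exp R * xx R (s / (mm R * rho R))) atTop (𝓝 (s^4/24)) := by
  have hm := tendsto_inv_atTop_zero.comp mm_tendsto
  have hi : Tendsto (fun R : ℝ => R⁻¹) atTop (𝓝 0) := tendsto_inv_atTop_zero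
  have hmain : Tendsto (fun R => s^4/24 * (R / rho R)^4) atTop (𝓝 (s^4/24)) := by
    simpa using (rho_lim.pow 4).const_mul (s^4/24)
  have herr : Tendsto (fun R => 3 * (|s|^4 * ((R / rho R)^4 * R⁻¹) + |s|^5 * ((R / rho R)^5 * (mm R)⁻¹))) atTop (𝓝 0) := by
    have := ((((rho_lim.pow 4).mul hi).const_mul (|s|^4)).add
      (((rho_lim.pow 5).mul hm).const_mul (|s|^5))).const_mul 3
    simpa using this
  have hd : Tendsto (fun R => Real.exp R * xx R (s / (mm R * rho R)) - s^4/24 * (R / rho R)^4) atTop (𝓝 0) := by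
    refine squeeze_zero_norm' ?_ herr
    filter_upwards [eventually_ge_atTop 1, mm_tendsto.eventually_ge_atTop |s|] with R hR hms
    have hr := rho_pos hR
    have hm0 := mm_pos R
    have hRr := le_rho hR
    have hab : |s / (mm R * rho R)| = |s| / (mm R * rho R) := by
      rw [abs_div, abs_of_pos (mul_pos hm0 hr)]
    have hsm : R * |s / (mm R * rho R)| ≤ 1 := by
      rw [hab, ← mul_div_assoc, div_le_one (by positivity)]
      nlinarith [mul_le_mul hRr hms (abs_nonneg s) hr.le]
    have h := (HH_est R _ hR hsm).1
    rw [Real.norm_eq_abs]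
    have e1 : Real.exp R * xx R (s / (mm R * rho R)) - s^4/24 * (R / rho R)^4 =
      (mm R)^4 * ((HH R (s / (mm R * rho R))).re - 1 + (R + R^2) * (s / (mm R * rho R))^2 / 2 - R^4 * (s / (mm R * rho R))^4 / 24) := by
      rw [xx, ← mm_sq]; field_simp
    rw [e1, abs_mul, abs_of_pos (pow_pos hm0 4)]
    refine (mul_le_mul_of_nonneg_left h (by positivity)).trans (le_of_eq ?_)
    rw [hab]
    field_simp
  have := hd.add hmain
  rw [zero_add] at this
  exact this.congr fun R => by ring

open Filter Topology in
lemma y_lim (s : ℝ) : Tendsto (fun R => mm R * yy R (s / (mm R * rho R))) atTop (𝓝 (-s^3/6)) := by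
  have hm := tendsto_inv_atTop_zero.comp mm_tendsto
  have hi : Tendsto (fun R : ℝ => R⁻¹) atTop (𝓝 0) := tendsto_inv_atTop_zero
  have hmain : Tendsto (fun R => s * ((R / rho R) * R⁻¹) + -s^3/6 * (((R⁻¹)^2 + 3 * R⁻¹ + 1) * (R / rho R)^3)) atTop (𝓝 (-s^3/6)) := by
    have := ((rho_lim.mul hi).const_mul s).add (((((hi.pow 2).add (hi.const_mul 3)).add_const 1).mul (rho_lim.pow 3)).const_mul (-s^3/6))
    simpa using this
  have herr : Tendsto (fun R => 3 * (|s|^4 * ((R / rho R)^4 * R⁻¹ * (mm R)⁻¹) + |s|^5 * ((R / rho R)^5 * (mm R)⁻¹ * (mm R)⁻¹))) atTop (𝓝 0) := by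
    have := (((((rho_lim.pow 4).mul hi).mul hm).const_mul (|s|^4)).add
      ((((rho_lim.pow 5).mul hm).mul hm).const_mul (|s|^5))).const_mul 3
    simpa using this
  have hd : Tendsto (fun R => mm R * yy R (s / (mm R * rho R)) - (s * ((R / rho R) * R⁻¹) + -s^3/6 * (((R⁻¹)^2 + 3 * R⁻¹ + 1) * (R / rho R)^3))) atTop (𝓝 0) := by
    refine squeeze_zero_norm' ?_ herr
    filter_upwards [eventually_ge_atTop 1, mm_tendsto.eventually_ge_atTop |s|] with R hR hms
    have hr := rho_pos hR
    have hm0 := mm_pos R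
    have hRr := le_rho hR
    have hab : |s / (mm R * rho R)| = |s| / (mm R * rho R) := by
      rw [abs_div, abs_of_pos (mul_pos hm0 hr)]
    have hsm : R * |s / (mm R * rho R)| ≤ 1 := by
      rw [hab, ← mul_div_assoc, div_le_one (by positivity)]
      nlinarith [mul_le_mul hRr hms (abs_nonneg s) hr.le]
    have h := (HH_est R _ hR hsm).2
    rw [Real.norm_eq_abs]
    have e1 : mm R * yy R (s / (mm R * rho R)) - (s * ((R / rho R) * R⁻¹) + -s^3/6 * (((R⁻¹)^2 + 3 * R⁻¹ + 1) * (R / rho R)^3)) =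
      (mm R)^3 * ((HH R (s / (mm R * rho R))).im - R * (s / (mm R * rho R)) + (R + 3 * R^2 + R^3) * (s / (mm R * rho R))^3 / 6) := by
      rw [yy, ← mm_sq]; field_simp; ring
    rw [e1, abs_mul, abs_of_pos (pow_pos hm0 3)]
    refine (mul_le_mul_of_nonneg_left h (by positivity)).trans (le_of_eq ?_)
    rw [hab]
    field_simp
  have := hd.add hmain
  rw [zero_add] at this
  exact this.congr fun R => by ring

lemma exp_scale (R s : ℝ) (hR : 1 ≤ R) :
    Real.exp R * (R + R^2) * (s / (mm R * rho R))^2 = s^2 := by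
  have hr := rho_pos hR
  have hm0 := mm_pos R
  rw [← mm_sq, div_pow, mul_pow, rho_sq hR]
  have : 0 < R := by linarith
  field_simp; ring

open Filter Topology in
lemma ph_lim (s : ℝ) : Tendsto (fun R => Real.exp R * (ph R (s / (mm R * rho R)) - Real.exp (-s^2/2)))
    atTop (𝓝 (Real.exp (-s^2/2) * (s^4/24 - s^6/72))) := by
  have h := lim_comb Real.exp mm _ _ _ _ mm_tendsto (fun R => (mm_sq R).symm) (x_lim s) (y_lim s)
  have h2 := h.const_mul (Real.exp (-s^2/2))
  have e : s^4/24 - (-s^3/6)^2/2 = s^4/24 - s^6/72 := by ring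
  rw [e] at h2
  refine h2.congr' ?_
  filter_upwards [eventually_ge_atTop 1] with R hR
  rw [ph_eq, exp_scale R s hR]; ring

set_option maxHeartbeats 1000000 in
lemma ph_dom (R s : ℝ) (hR : 1 ≤ R) (hs : |s| ≤ mm R * rho R / (6 * R)) :
    |Real.exp R * (ph R (s / (mm R * rho R)) - Real.exp (-s^2/2))| ≤
      100 * (s^2 + s^4 + s^6) * Real.exp (-s^2/4) := by
  have hr := rho_pos hR
  have hm0 := mm_pos R
  have hR0 : 0 < R := by linarith
  set θ := s / (mm R * rho R) with hθ
  have hab : |θ| = |s| / (mm R * rho R) := by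
    rw [hθ, abs_div, abs_of_pos (mul_pos hm0 hr)]
  have hsm : R * |θ| ≤ 1 / 6 := by
    rw [hab]
    rw [le_div_iff₀ (by positivity)] at hs
    rw [← mul_div_assoc, div_le_iff₀ (by positivity)]
    linarith
  have hsc := exp_scale R s hR
  rw [← hθ] at hsc
  obtain ⟨h1, h2⟩ := HH_est R θ hR (by linarith)
  set t := |θ| with ht
  have ht0 : 0 ≤ t := abs_nonneg _
  have ht1 : t ≤ 1 := by nlinarith
  set M := Real.exp R with hM
  have hM0 : 0 < M := Real.exp_pos R
  have hsq : θ^2 = t^2 := (sq_abs θ).symm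
  have hs2 : M * R^2 * t^2 ≤ s^2 := by
    rw [← hsc, hsq]
    gcongr; linarith
  -- x bound
  have ax : |xx R θ| ≤ 7 * M * R^4 * t^4 := by
    have e : xx R θ = M * (((HH R θ).re - 1 + (R + R^2) * θ^2 / 2 - R^4 * θ^4 / 24) + R^4 * θ^4 / 24) := by
      rw [xx]; ring
    rw [e, abs_mul, abs_of_pos hM0]
    have : |R^4 * θ^4 / 24| = R^4 * t^4 / 24 := by
      rw [abs_div, abs_mul, abs_pow, abs_pow, abs_of_pos hR0]; norm_num [ht]
    have h3 := (abs_add_le ((HH R θ).re - 1 + (R + R^2) * θ^2 / 2 - R^4 * θ^4 / 24) (R^4 * θ^4 / 24)).trans (add_le_add h1 this.le)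
    have r1 : R^3 * t^4 ≤ R^4 * t^4 := by gcongr <;> linarith
    have r2 : R^5 * t^5 ≤ R^4 * t^4 := by
      calc R^5 * t^5 = (R^4 * t^4) * (R * t) := by ring
        _ ≤ (R^4 * t^4) * 1 := by gcongr; linarith
        _ = _ := by ring
    have r0 : 0 ≤ R^4 * t^4 := by positivity
    calc _ ≤ M * _ := mul_le_mul_of_nonneg_left h3 hM0.le
      _ ≤ M * (7 * (R^4 * t^4)) := by gcongr; linarith
      _ = _ := by ring
  have ax2 : |xx R θ| ≤ s^2/4 := by
    have : 7 * M * R^4 * t^4 = 7 * (R * t)^2 * (M * R^2 * t^2) := by ring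
    rw [this] at ax
    have h4 : (R*t)^2 ≤ (1/6)^2 := by gcongr
    have h5 : 0 ≤ M * R^2 * t^2 := by positivity
    nlinarith
  have ax3 : M * |xx R θ| ≤ 7 * s^4 := by
    calc M * |xx R θ| ≤ M * (7 * M * R^4 * t^4) := by gcongr
      _ = 7 * (M * R^2 * t^2)^2 := by ring
      _ ≤ 7 * (s^2)^2 := by gcongr
      _ = _ := by ring
  have ay : |yy R θ| ≤ t + 7 * M * R^3 * t^3 := by
    have e : yy R θ = (θ - M * ((R + 3 * R^2 + R^3) * θ^3 / 6)) + M * ((HH R θ).im - R * θ + (R + 3 * R^2 + R^3) * θ^3 / 6) := by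
      rw [yy]; ring
    have : |M * ((R + 3 * R^2 + R^3) * θ^3 / 6)| = M * ((R + 3 * R^2 + R^3) * t^3 / 6) := by
      have hp : 0 < R + 3 * R^2 + R^3 := by positivity
      rw [abs_mul, abs_div, abs_mul, abs_pow, abs_of_pos hM0, abs_of_pos hp]; norm_num [ht]
    have h3 : |θ - M * ((R + 3 * R^2 + R^3) * θ^3 / 6)| ≤ t + M * ((R + 3 * R^2 + R^3) * t^3 / 6) := by
      rw [← this]; exact abs_sub _ _
    have h4 : |M * ((HH R θ).im - R * θ + (R + 3 * R^2 + R^3) * θ^3 / 6)| ≤ M * (3 * (R^3 * t^4 + R^5 * t^5)) := by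
      rw [abs_mul, abs_of_pos hM0]; gcongr
    rw [e]
    refine (abs_add_le _ _).trans ((add_le_add h3 h4).trans ?_)
    have r0 : 0 ≤ R^3 * t^3 := by positivity
    have r1 : R^3 * t^4 ≤ R^3 * t^3 := by
      calc R^3 * t^4 = (R^3 * t^3) * t := by ring
        _ ≤ (R^3 * t^3) * 1 := by gcongr
        _ = _ := by ring
    have r2 : R^5 * t^5 ≤ R^3 * t^3 := by
      calc R^5 * t^5 = (R^3 * t^3) * (R * t)^2 := by ring
        _ ≤ (R^3 * t^3) * (1/6)^2 := by gcongr
        _ ≤ _ := by linarith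
    have r3 : R * t^3 ≤ R^3 * t^3 := by gcongr; nlinarith
    have r4 : R^2 * t^3 ≤ R^3 * t^3 := by gcongr <;> linarith
    have : (R + 3 * R^2 + R^3) * t^3 / 6 + 3 * (R^3 * t^4 + R^5 * t^5) ≤ 7 * (R^3 * t^3) := by linarith
    have := mul_le_mul_of_nonneg_left this hM0.le
    linarith
  have ay2 : M * (yy R θ)^2 ≤ 2 * s^2 + 98 * s^6 := by
    have h3 : (yy R θ)^2 ≤ 2 * t^2 + 98 * (M^2 * R^6 * t^6) := by
      rw [← sq_abs (yy R θ)]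
      calc |yy R θ|^2 ≤ (t + 7 * M * R^3 * t^3)^2 := by gcongr
        _ ≤ _ := add_sq_le.trans (le_of_eq (by ring))
    have h4 : M * t^2 ≤ s^2 := by
      refine le_trans ?_ hs2
      have : M * t^2 = M * 1 * t^2 := by ring
      rw [this]; gcongr; nlinarith
    calc M * (yy R θ)^2 ≤ M * (2 * t^2 + 98 * (M^2 * R^6 * t^6)) := by gcongr
      _ = 2 * (M * t^2) + 98 * (M * R^2 * t^2)^3 := by ring
      _ ≤ 2 * s^2 + 98 * (s^2)^3 := by gcongr
      _ = _ := by ring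
  rw [ph_eq, ← hM, hsc]
  have e : M * (Real.exp (-s^2/2) * (Real.exp (xx R θ) * Real.cos (yy R θ)) - Real.exp (-s^2/2))
    = Real.exp (-s^2/2) * (M * (Real.exp (xx R θ) - 1) * Real.cos (yy R θ) + M * (Real.cos (yy R θ) - 1)) := by ring
  rw [e, abs_mul, abs_of_pos (Real.exp_pos _)]
  have b1 : |Real.exp (xx R θ) - 1| ≤ |xx R θ| * Real.exp (s^2/4) := by
    have : |Real.exp (xx R θ) - 1| ≤ |xx R θ| * Real.exp |xx R θ| := by
      have h3 := Complex.norm_exp_sub_sum_le_norm_mul_exp (xx R θ : ℂ) 1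
      simp only [Finset.sum_range_one, pow_zero, Nat.factorial_zero, Nat.cast_one, div_one, pow_one] at h3
      rw [Complex.norm_real, Real.norm_eq_abs, ← Complex.ofReal_exp] at h3
      have : ((Real.exp (xx R θ) : ℝ) : ℂ) - 1 = ((Real.exp (xx R θ) - 1 : ℝ) : ℂ) := by push_cast; rfl
      rw [this, Complex.norm_real, Real.norm_eq_abs] at h3
      exact h3
    refine this.trans ?_
    gcongr
  have b2 : |Real.cos (yy R θ) - 1| ≤ (yy R θ)^2/2 := by
    rw [abs_le]; constructor
    · linarith [Real.one_sub_sq_div_two_le_cos (x := yy R θ)]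
    · linarith [Real.cos_le_one (yy R θ), sq_nonneg (yy R θ)]
  have b3 : |M * (Real.exp (xx R θ) - 1) * Real.cos (yy R θ) + M * (Real.cos (yy R θ) - 1)| ≤
      7 * s^4 * Real.exp (s^2/4) + (s^2 + 49 * s^6) := by
    refine (abs_add_le _ _).trans (add_le_add ?_ ?_)
    · rw [abs_mul, abs_mul, abs_of_pos hM0]
      calc M * |Real.exp (xx R θ) - 1| * |Real.cos (yy R θ)| ≤ M * (|xx R θ| * Real.exp (s^2/4)) * 1 := by
            gcongr; exact Real.abs_cos_le_one _
        _ = (M * |xx R θ|) * Real.exp (s^2/4) := by ring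
        _ ≤ _ := by gcongr
    · rw [abs_mul, abs_of_pos hM0]
      calc M * |Real.cos (yy R θ) - 1| ≤ M * ((yy R θ)^2/2) := by gcongr
        _ ≤ _ := by linarith
  have hE : 1 ≤ Real.exp (s^2/4) := Real.one_le_exp (by positivity)
  have hs6 : 0 ≤ s^6 := by positivity
  have hs4 : 0 ≤ s^4 := by positivity
  calc _ ≤ Real.exp (-s^2/2) * (7 * s^4 * Real.exp (s^2/4) + (s^2 + 49 * s^6)) := by gcongr
    _ ≤ Real.exp (-s^2/2) * (7 * s^4 * Real.exp (s^2/4) + (s^2 + 49 * s^6) * Real.exp (s^2/4)) := by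
      gcongr; nlinarith [sq_nonneg s]
    _ = (7 * s^4 + (s^2 + 49 * s^6)) * (Real.exp (-s^2/2) * Real.exp (s^2/4)) := by ring
    _ = (7 * s^4 + (s^2 + 49 * s^6)) * Real.exp (-s^2/4) := by rw [← Real.exp_add]; congr 2; ring
    _ ≤ _ := by gcongr; nlinarith [sq_nonneg s]

open MeasureTheory in
lemma int_pow_gauss (k : ℕ) (b : ℝ) (hb : 0 < b) :
    Integrable (fun s : ℝ => s^k * Real.exp (-b * s^2)) := by
  have := integrable_rpow_mul_exp_neg_mul_sq hb (s := (k:ℝ)) (by have : (0:ℝ) ≤ k := by positivity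
                                                                 linarith)
  simpa [Real.rpow_natCast] using this

open MeasureTheory in
lemma moment (k : ℕ) : ∫ s : ℝ, s^(2*k) * Real.exp (-(1/2) * s^2) =
    2 * ((1/2:ℝ) ^ (-((k:ℝ) + 1/2)) * (1/2) * Real.Gamma (k + 1/2)) := by
  have h := integral_comp_abs (f := fun x : ℝ => x^(2*k) * Real.exp (-(1/2) * x^2))
  have e : ∀ x : ℝ, |x|^(2*k) * Real.exp (-(1/2) * |x|^2) = x^(2*k) * Real.exp (-(1/2) * x^2) := by
    intro x; rw [pow_mul, sq_abs, pow_mul]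
  simp only [e] at h
  rw [h]
  congr 1
  have h2 := integral_rpow_mul_exp_neg_mul_rpow (p := 2) (q := ((2*k : ℕ) : ℝ)) (b := 1/2) (by norm_num)
    (by have : (0:ℝ) ≤ ((2*k:ℕ):ℝ) := by positivity
        linarith) (by norm_num)
  simp only [Real.rpow_natCast, Real.rpow_two] at h2
  rw [h2]
  congr 2
  · congr 2; push_cast; ring
  · push_cast; ring_nf

lemma half_pow (k : ℕ) : (1/2:ℝ) ^ (-((k:ℝ) + 1/2)) = 2^k * Real.sqrt 2 := by
  rw [Real.rpow_neg (by norm_num), one_div, Real.inv_rpow (by norm_num), inv_inv,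
    Real.rpow_add (by norm_num), Real.rpow_natCast, Real.sqrt_eq_rpow]
  norm_num

open MeasureTheory in
lemma mom0 : ∫ s : ℝ, Real.exp (-s^2/2) = Real.sqrt (2 * Real.pi) := by
  have := integral_gaussian (1/2)
  rw [show Real.pi / (1/2) = 2 * Real.pi by ring] at this
  rw [← this]; congr 1; funext s; congr 1; ring

open MeasureTheory in
lemma mom_lim : ∫ s : ℝ, Real.exp (-s^2/2) * (s^4/24 - s^6/72) = Real.sqrt (2 * Real.pi) * (-1/12) := by
  have h4 := moment 2
  have h6 := moment 3
  rw [half_pow, Real.Gamma_nat_add_half] at h4 h6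
  have e : ∀ s : ℝ, Real.exp (-s^2/2) * (s^4/24 - s^6/72) =
     (1/24) * (s^(2*2) * Real.exp (-(1/2) * s^2)) - (1/72) * (s^(2*3) * Real.exp (-(1/2) * s^2)) := by
    intro s
    rw [show -(1/2) * s^2 = -s^2/2 by ring]; ring
  simp only [e]
  rw [integral_sub ((int_pow_gauss _ _ (by norm_num)).const_mul _) ((int_pow_gauss _ _ (by norm_num)).const_mul _),
    integral_const_mul, integral_const_mul, h4, h6, Real.sqrt_mul (by norm_num)]
  norm_num [Nat.doubleFactorial]
  ring

lemma ph_cont (R : ℝ) : Continuous (ph R) := by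
  unfold ph HH
  fun_prop

open MeasureTheory Filter Topology in
lemma central : Tendsto (fun R => Real.exp R * (mm R * rho R * (∫ θ in (-(1/(6*R)))..(1/(6*R)), ph R θ)
    - Real.sqrt (2 * Real.pi))) atTop (𝓝 (Real.sqrt (2 * Real.pi) * (-1/12))) := by
  set L : ℝ → ℝ := fun R => mm R * rho R / (6 * R) with hL
  set h : ℝ → ℝ → ℝ := fun R s => Real.exp R * ((Set.Ioc (-L R) (L R)).indicator
    (fun s => ph R (s / (mm R * rho R))) s - Real.exp (-s^2/2)) with hh
  have hLbig : ∀ R, 1 ≤ R → mm R / 6 ≤ L R := by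
    intro R hR
    have := le_rho hR
    have := mm_pos R
    simp only [hL]
    rw [le_div_iff₀ (by linarith)]
    nlinarith
  have hdom : Tendsto (fun R => ∫ s, h R s) atTop (𝓝 (∫ s : ℝ, Real.exp (-s^2/2) * (s^4/24 - s^6/72))) := by
    apply tendsto_integral_filter_of_dominated_convergence (fun s => 100 * (s^2 + s^4 + s^6) * Real.exp (-s^2/4))
    · refine Eventually.of_forall fun R => ?_
      apply Measurable.aestronglyMeasurable
      apply Measurable.const_mul
      apply Measurable.sub
      · apply Measurable.indicator _ measurableSet_Ioc
        exact ((ph_cont R).measurable).comp (measurable_id.div_const _)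
      · fun_prop
    · filter_upwards [eventually_ge_atTop 1] with R hR
      refine Eventually.of_forall fun s => ?_
      rw [Real.norm_eq_abs]
      simp only [hh]
      by_cases hs : s ∈ Set.Ioc (-L R) (L R)
      · rw [Set.indicator_of_mem hs]
        exact ph_dom R s hR (abs_le.2 ⟨hs.1.le, hs.2⟩)
      · rw [Set.indicator_of_notMem hs]
        have hs' : L R ≤ |s| := by
          by_contra hc
          push Not at hc
          have := abs_lt.1 hc
          exact hs ⟨this.1, this.2.le⟩
        have h1 : mm R ≤ 6 * |s| := by linarith [hLbig R hR]
        have h2 : Real.exp R ≤ 36 * s^2 := by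
          rw [← mm_sq, ← sq_abs s]
          nlinarith [mm_pos R]
        rw [zero_sub, mul_neg, abs_neg, abs_of_pos (by positivity)]
        have hs6 : 0 ≤ s^6 := by positivity
        have hs4 : 0 ≤ s^4 := by positivity
        have hs2 : 0 ≤ s^2 := by positivity
        have : Real.exp (-s^2/2) ≤ Real.exp (-s^2/4) := Real.exp_le_exp.2 (by linarith)
        calc Real.exp R * Real.exp (-s^2/2) ≤ (36 * s^2) * Real.exp (-s^2/4) := by gcongr
          _ ≤ _ := by gcongr <;> linarith
    · have e : ∀ s : ℝ, 100 * (s^2 + s^4 + s^6) * Real.exp (-s^2/4) =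
        100 * (s^2 * Real.exp (-(1/4) * s^2)) + 100 * (s^4 * Real.exp (-(1/4) * s^2)) + 100 * (s^6 * Real.exp (-(1/4) * s^2)) := by
        intro s
        rw [show -(1/4) * s^2 = -s^2/4 by ring]; ring
      simp only [e]
      exact (((int_pow_gauss _ _ (by norm_num)).const_mul _).add ((int_pow_gauss _ _ (by norm_num)).const_mul _)).add ((int_pow_gauss _ _ (by norm_num)).const_mul _)
    · refine Eventually.of_forall fun s => ?_
      refine (ph_lim s).congr' ?_
      filter_upwards [eventually_ge_atTop 1, mm_tendsto.eventually_gt_atTop (6 * |s|)] with R hR hs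
      have : |s| < L R := by linarith [hLbig R hR]
      have := abs_lt.1 this
      simp only [hh]
      have hmem : s ∈ Set.Ioc (-L R) (L R) := ⟨this.1, this.2.le⟩
      rw [Set.indicator_of_mem hmem]
  rw [mom_lim] at hdom
  refine hdom.congr' ?_
  filter_upwards [eventually_ge_atTop 1] with R hR
  have hr := rho_pos hR
  have hm0 := mm_pos R
  have hL0 : 0 < L R := by linarith [hLbig R hR]
  simp only [hh]
  have hint0 : Integrable (fun s : ℝ => Real.exp (-s^2/2)) := by
    have := int_pow_gauss 0 (1/2) (by norm_num)
    refine this.congr (Eventually.of_forall fun s => ?_)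
    simp only [pow_zero, one_mul]; congr 1; ring
  have hc : Continuous (fun s => ph R (s / (mm R * rho R))) := (ph_cont R).comp (by fun_prop)
  rw [integral_const_mul, integral_sub _ hint0, mom0, integral_indicator measurableSet_Ioc,
    ← intervalIntegral.integral_of_le (by linarith),
    intervalIntegral.integral_comp_div (f := ph R) (by positivity)]
  · have : L R / (mm R * rho R) = 1 / (6 * R) := by simp only [hL]; field_simp
    rw [neg_div, this, smul_eq_mul]
  · rw [integrable_indicator_iff measurableSet_Ioc]
    exact hc.integrableOn_Ioc

lemma outer_pt (R θ : ℝ) (hR : 1 ≤ R) (h1 : 1/(6*R) ≤ |θ|) (h2 : |θ| ≤ Real.pi) :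
    ‖ph R θ‖ ≤ Real.exp (-(Real.exp R / (201 * R))) := by
  have hR0 : 0 < R := by linarith
  have hcos := Real.cos_le_one_sub_mul_cos_sq h2
  have hnorm : ‖HH R θ‖ = Real.exp (R * (Real.cos θ - 1)) := by
    rw [HH, Complex.norm_exp]
    congr 1
    rw [Complex.re_ofReal_mul, Complex.sub_re, mul_comm Complex.I, Complex.exp_ofReal_mul_I_re]
    simp
  have hre : (HH R θ).re ≤ Real.exp (R * (Real.cos θ - 1)) := hnorm ▸ Complex.re_le_norm _
  have hu : R * (Real.cos θ - 1) ≤ -(1/(200*R)) := by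
    have hsq : (1/(6*R))^2 ≤ θ^2 := by rw [← sq_abs θ]; gcongr
    have hpi : Real.pi^2 ≤ 10 := by nlinarith [Real.pi_lt_d2, Real.pi_pos]
    have hpi2 : (1/5:ℝ) ≤ 2 / Real.pi^2 := by
      rw [le_div_iff₀ (by positivity)]; linarith
    have h3 : (1/5) * (1/(6*R))^2 ≤ 2 / Real.pi^2 * θ^2 := by gcongr
    have h4 : Real.cos θ - 1 ≤ -((1/5) * (1/(6*R))^2) := by linarith
    have h5 := mul_le_mul_of_nonneg_left h4 hR0.le
    refine h5.trans ?_
    have : R * -((1/5) * (1/(6*R))^2) = -(1/(180*R)) := by field_simp; norm_num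
    rw [this]
    apply neg_le_neg
    apply one_div_le_one_div_of_le <;> linarith
  have hexp : Real.exp (-(1/(200*R))) ≤ 1 - 1/(201*R) := by
    rw [Real.exp_neg]
    have h3 : 1 + 1/(200*R) ≤ Real.exp (1/(200*R)) := by linarith [Real.add_one_le_exp (1/(200*R))]
    calc (Real.exp (1/(200*R)))⁻¹ ≤ (1 + 1/(200*R))⁻¹ := by gcongr
      _ = 1 - 1/(200*R+1) := by field_simp; ring
      _ ≤ _ := by
        gcongr; linarith
  have hP : (HH R θ).re - 1 ≤ -(1/(201*R)) := by
    have := Real.exp_le_exp.2 hu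
    linarith
  rw [ph, norm_mul, Real.norm_of_nonneg (Real.exp_pos _).le]
  calc _ ≤ Real.exp (Real.exp R * ((HH R θ).re - 1)) * 1 := by
        gcongr; exact Real.abs_cos_le_one _
    _ ≤ _ := by
      rw [mul_one]
      apply Real.exp_le_exp.2
      have := mul_le_mul_of_nonneg_left hP (Real.exp_pos R).le
      refine this.trans (le_of_eq ?_); ring

open MeasureTheory Filter Topology in
lemma outer : Tendsto (fun R => Real.exp R * (mm R * rho R * ((∫ θ in (-Real.pi)..(-(1/(6*R))), ph R θ)
    + ∫ θ in (1/(6*R))..Real.pi, ph R θ))) atTop (𝓝 0) := by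
  have h0 : Tendsto (fun R => 4 * Real.pi * Real.exp (-R)) atTop (𝓝 0) := by
    have := (Real.tendsto_exp_neg_atTop_nhds_zero).const_mul (4 * Real.pi)
    simpa using this
  refine squeeze_zero_norm' ?_ h0
  have hbig : ∀ᶠ R : ℝ in atTop, R^2 * Real.exp (-R) ≤ 1/804 :=
    (Real.tendsto_pow_mul_exp_neg_atTop_nhds_zero 2).eventually_le_const (by norm_num)
  filter_upwards [eventually_ge_atTop 1, hbig] with R hR hb
  have hr := rho_pos hR
  have hm0 := mm_pos R
  have hR0 : 0 < R := by linarith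
  have hd : 1/(6*R) ≤ 1 := by rw [div_le_one (by linarith)]; linarith
  have hd0 : 0 < 1/(6*R) := by positivity
  have hpi := Real.pi_gt_three
  set ε := Real.exp (-(Real.exp R / (201 * R))) with hε
  have hε0 : 0 < ε := Real.exp_pos _
  have i1 : ‖∫ θ in (-Real.pi)..(-(1/(6*R))), ph R θ‖ ≤ ε * Real.pi := by
    refine (intervalIntegral.norm_integral_le_of_norm_le_const (C := ε) fun θ hθ => ?_).trans ?_
    · rw [Set.uIoc_of_le (by linarith)] at hθ
      have hneg : θ ≤ 0 := by linarith [hθ.2]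
      apply outer_pt R θ hR
      · rw [abs_of_nonpos hneg]; linarith [hθ.2]
      · rw [abs_of_nonpos hneg]; linarith [hθ.1]
    · gcongr
      rw [abs_of_nonneg] <;> linarith
  have i2 : ‖∫ θ in (1/(6*R))..Real.pi, ph R θ‖ ≤ ε * Real.pi := by
    refine (intervalIntegral.norm_integral_le_of_norm_le_const (C := ε) fun θ hθ => ?_).trans ?_
    · rw [Set.uIoc_of_le (by linarith)] at hθ
      have hpos : 0 ≤ θ := by linarith [hθ.1]
      apply outer_pt R θ hR
      · rw [abs_of_nonneg hpos]; linarith [hθ.1]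
      · rw [abs_of_nonneg hpos]; linarith [hθ.2]
    · gcongr
      rw [abs_of_nonneg] <;> linarith
  have i3 := norm_add_le_of_le i1 i2
  rw [norm_mul, norm_mul, Real.norm_of_nonneg (Real.exp_pos R).le, Real.norm_of_nonneg (by positivity)]
  have hrho : rho R ≤ 2 * Real.exp R := by
    have : rho R ≤ 2 * R := by
      rw [rho, Real.sqrt_le_left (by linarith)]; nlinarith
    linarith [Real.add_one_le_exp R]
  have hmm : mm R ≤ Real.exp R := Real.exp_le_exp.2 (by linarith)
  have hεb : ε ≤ Real.exp (-(4*R)) := by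
    apply Real.exp_le_exp.2
    apply neg_le_neg
    rw [le_div_iff₀ (by positivity)]
    have : R^2 ≤ 1/804 * Real.exp R := by
      have h3 := mul_le_mul_of_nonneg_right hb (Real.exp_pos R).le
      rwa [mul_assoc, ← Real.exp_add, neg_add_cancel, Real.exp_zero, mul_one] at h3
    linarith
  calc _ ≤ Real.exp R * (Real.exp R * (2 * Real.exp R) * (Real.exp (-(4*R)) * Real.pi + Real.exp (-(4*R)) * Real.pi)) := by
        gcongr
        refine i3.trans ?_
        gcongr
    _ = 4 * Real.pi * (Real.exp R * Real.exp R * Real.exp R * Real.exp (-(4*R))) := by ring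
    _ = _ := by
      rw [← Real.exp_add, ← Real.exp_add, ← Real.exp_add]; congr 2; ring

open MeasureTheory Filter Topology in
lemma main_real : Tendsto (fun R => Real.exp R * (mm R * rho R / Real.sqrt (2 * Real.pi) *
    (∫ θ in (-Real.pi)..Real.pi, ph R θ) - 1)) atTop (𝓝 (-1/12)) := by
  have h := (central.add outer).div_const (Real.sqrt (2 * Real.pi))
  have hs : 0 < Real.sqrt (2 * Real.pi) := Real.sqrt_pos.2 (by positivity)
  rw [add_zero, mul_div_cancel_left₀ _ hs.ne'] at h
  refine h.congr fun R => ?_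
  have hi : ∀ a b, IntervalIntegrable (ph R) volume a b := fun a b => (ph_cont R).intervalIntegrable a b
  rw [← intervalIntegral.integral_add_adjacent_intervals (hi (-Real.pi) (-(1/(6*R)))) (hi _ Real.pi),
    ← intervalIntegral.integral_add_adjacent_intervals (hi (-(1/(6*R))) (1/(6*R))) (hi _ Real.pi)]
  field_simp
  ring

lemma W_spec (n : ℕ) : 0 < lambertW (n+1) ∧ lambertW (n+1) * Real.exp (lambertW (n+1)) = n + 1 := by
  have hex : ∃ y : ℝ, (fun y : ℝ => y * Real.exp y) y = (n:ℝ) + 1 := by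
    have hc : Continuous (fun y : ℝ => y * Real.exp y) := by fun_prop
    have := intermediate_value_Icc (f := fun y : ℝ => y * Real.exp y) (a := (0:ℝ)) (b := (n:ℝ)+1) (by positivity) hc.continuousOn
    have hm : (n:ℝ) + 1 ∈ Set.Icc ((fun y : ℝ => y * Real.exp y) 0) ((fun y : ℝ => y * Real.exp y) (n+1)) := by
      constructor
      · simp; positivity
      · have := Real.one_le_exp (x := (n:ℝ)+1) (by positivity)
        have h0 : (0:ℝ) ≤ n + 1 := by positivity
        simp only; nlinarith
    obtain ⟨y, _, hy⟩ := this hm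
    exact ⟨y, hy⟩
  have h := Function.invFun_eq hex
  have h' : lambertW (n+1) * Real.exp (lambertW (n+1)) = n + 1 := h
  refine ⟨?_, h'⟩
  have : 0 < lambertW (n+1) * Real.exp (lambertW (n+1)) := by rw [h']; positivity
  exact pos_of_mul_pos_left this (Real.exp_pos _).le

open Filter Topology in
lemma W_tendsto : Tendsto (fun n : ℕ => lambertW (n+1)) atTop atTop := by
  rw [tendsto_atTop]
  intro b
  filter_upwards [tendsto_natCast_atTop_atTop.eventually_gt_atTop (b * Real.exp b)] with n hn
  obtain ⟨h1, h2⟩ := W_spec n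
  by_contra hc
  push Not at hc
  have : lambertW (n+1) * Real.exp (lambertW (n+1)) ≤ b * Real.exp b := by
    gcongr
    linarith
  linarith

lemma ratio_eq (n : ℕ) (hR : 1 ≤ lambertW (n+1)) : (Bell n : ℝ) / E n =
    mm (lambertW (n+1)) * rho (lambertW (n+1)) / Real.sqrt (2 * Real.pi) *
    (∫ θ in (-Real.pi)..Real.pi, ph (lambertW (n+1)) θ) := by
  obtain ⟨h1, h2⟩ := W_spec n
  rw [bell_integral n _ h1 h2, E]
  set R := lambertW (n+1) with hRd
  have hs : Real.sqrt (2 * Real.pi * (n+1) * (R+1)) = Real.sqrt (2 * Real.pi) * (mm R * rho R) := by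
    rw [← h2]
    have : 2 * Real.pi * (R * Real.exp R) * (R+1) = (2 * Real.pi) * (mm R * rho R)^2 := by
      rw [mul_pow, mm_sq, rho_sq hR]; ring
    rw [this, Real.sqrt_mul (by positivity), Real.sqrt_sq]
    exact (mul_pos (mm_pos R) (rho_pos hR)).le
  rw [hs]
  have hp : Real.sqrt (2 * Real.pi) ≠ 0 := (Real.sqrt_pos.2 (by positivity)).ne'
  have hp2 : 2 * Real.pi = Real.sqrt (2 * Real.pi) * Real.sqrt (2 * Real.pi) :=
    (Real.mul_self_sqrt (by positivity)).symm
  have := mm_pos R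
  have := rho_pos hR
  have := Real.pi_pos
  have hfac : (n.factorial : ℝ) ≠ 0 := by positivity
  have hE := (Real.exp_pos (Real.exp R - 1)).ne'
  have hRn : R^n ≠ 0 := by positivity
  generalize (∫ θ in (-Real.pi)..Real.pi, ph R θ) = J
  rw [show (n.factorial : ℝ) * Real.exp (Real.exp R - 1) / R^n / (2 * Real.pi) = (n.factorial : ℝ) * Real.exp (Real.exp R - 1) / R^n / (Real.sqrt (2 * Real.pi) * Real.sqrt (2 * Real.pi)) by rw [← hp2]]
  generalize Real.sqrt (2 * Real.pi) = q at *
  field_simp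

open Filter Topology in
lemma log_ratio : Tendsto (fun n : ℕ => lambertW (n+1) / Real.log n) atTop (𝓝 1) := by
  have hW := W_tendsto
  have h1 : Tendsto (fun n : ℕ => Real.log ((n:ℝ)/(n+1))) atTop (𝓝 0) := by
    have := (Real.continuousAt_log one_ne_zero).tendsto.comp (tendsto_natCast_div_add_atTop (1:ℝ))
    rw [Real.log_one] at this
    exact this
  have h2 : Tendsto (fun n : ℕ => Real.log (lambertW (n+1)) / lambertW (n+1)) atTop (𝓝 0) := by
    have := Real.isLittleO_log_id_atTop.tendsto_div_nhds_zero.comp hW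
    exact this
  have h3 := (((h1.mul (tendsto_inv_atTop_zero.comp hW)).add h2).add_const 1).inv₀ (by norm_num)
  simp only [mul_zero, zero_add, inv_one] at h3
  refine h3.congr' ?_
  filter_upwards [eventually_ge_atTop 1] with n hn
  obtain ⟨p1, p2⟩ := W_spec n
  have hn0 : (0:ℝ) < n := by exact_mod_cast hn
  have e : Real.log ((n:ℝ)/(n+1)) = Real.log n - (Real.log (lambertW (n+1)) + lambertW (n+1)) := by
    have e0 := congrArg Real.log p2
    rw [Real.log_mul p1.ne' (Real.exp_pos _).ne', Real.log_exp] at e0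
    rw [Real.log_div hn0.ne' (by positivity), ← e0]
  rw [e, ← inv_div]
  congr 1
  simp only [Function.comp]
  field_simp
  ring

theorem stmt_4 :
    Filter.Tendsto (fun n : ℕ => ((n : ℝ) / Real.log n) * ((Bell n : ℝ) / E n - 1))
      Filter.atTop (nhds (-1 / 12)) := by
  have h := (log_ratio.mul (tendsto_natCast_div_add_atTop (1:ℝ))).mul (main_real.comp W_tendsto)
  rw [one_mul, one_mul] at h
  refine h.congr' ?_
  filter_upwards [W_tendsto.eventually_ge_atTop 1] with n hn
  obtain ⟨p1, p2⟩ := W_spec n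
  simp only [Function.comp]
  rw [← ratio_eq n hn]
  generalize (Bell n : ℝ) / E n - 1 = z
  have hx : Real.exp (lambertW (n+1)) = (n+1) / lambertW (n+1) := by
    rw [eq_div_iff p1.ne', mul_comm]; exact p2
  rw [hx]
  have : (n:ℝ) + 1 ≠ 0 := by positivity
  field_simp
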